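/- Let I be a finite index type, let u : I → ℝ^n be vectors and w : I → ℝ nonnegative weights, and for a finite set C ⊆ I define f(C) = log det(I_n + Σ_{i∈C} w_i · u_i u_iᵀ). Then f is monotone and submodular: for all finite sets C ⊆ C' ⊆ I and every j ∉ C', one has f(C) ≤ f(C') and f(C' ∪ {j}) − f(C') ≤ f(C ∪ {j}) − f(C). -/

import Mathlib

open Matrix

/-!
If `A` is positive definite and `P = Rᴴ * R`, the matrix determinant lemma gives
`det (A + P) = det A * det (1 + R * A⁻¹ * Rᴴ)`. The second factor is at least `1`, so `det` is
monotone in the Loewner order. Inversion is antitone, so this factor decreases as `A` grows: that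
is diminishing returns for `log det` after the addition of `P`.
-/

section LoewnerOrder

open scoped ComplexOrder MatrixOrder

variable {n 𝕜 : Type*} [RCLike 𝕜] {A B : Matrix n n 𝕜}

theorem posDef_of_le (hA : A.PosDef) (hAB : A ≤ B) : B.PosDef := by
  simpa only [add_sub_cancel] using hA.add_posSemidef (le_iff.1 hAB)

variable [Fintype n] [DecidableEq n]

theorem det_one_add_eq_prod_eigenvalues (hA : A.IsHermitian) :
    (1 + A).det = ∏ i, (1 + hA.eigenvalues i : 𝕜) := by
  have h_diag : 1 + A = Unitary.conjStarAlgAut 𝕜 _ hA.eigenvectorUnitary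
      (diagonal fun i ↦ (1 + hA.eigenvalues i : 𝕜)) := by
    conv_lhs => rw [hA.spectral_theorem, ← map_one (Unitary.conjStarAlgAut 𝕜 _ _), ← map_add,
      ← diagonal_one, diagonal_add]
    rfl
  rw [h_diag, det_map, det_diagonal]

theorem one_le_det_one_add (hA : A.PosSemidef) : 1 ≤ (1 + A).det := by
  rw [det_one_add_eq_prod_eigenvalues hA.isHermitian]
  refine Finset.univ.one_le_prod fun i _ ↦ ?_
  exact_mod_cast le_add_of_nonneg_right (hA.eigenvalues_nonneg i)

theorem det_le_det_of_le (hA : A.PosDef) (hAB : A ≤ B) : A.det ≤ B.det := by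
  obtain ⟨R, hR⟩ := CStarAlgebra.nonneg_iff_eq_star_mul_self.1 (sub_nonneg.2 hAB)
  calc A.det ≤ A.det * (1 + R * A⁻¹ * Rᴴ).det :=
        le_mul_of_one_le_right hA.det_pos.le
          (one_le_det_one_add (hA.inv.posSemidef.mul_mul_conjTranspose_same R))
    _ = B.det := by
        rw [← det_add_mul _ _ hA.det_pos.ne'.isUnit, ← star_eq_conjTranspose, ← hR, add_sub_cancel]

-- `B - A` and `A⁻¹ - B⁻¹` are the two Schur complements of the block matrix `[B, 1; 1, A⁻¹]`.
theorem inv_le_inv_of_le (hA : A.PosDef) (hAB : A ≤ B) : B⁻¹ ≤ A⁻¹ := by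
  have hB : B.PosDef := posDef_of_le hA hAB
  let := hA.isUnit.invertible
  let := hB.isUnit.invertible
  have h_block : (fromBlocks B 1 1ᴴ A⁻¹).PosSemidef :=
    (hA.inv.fromBlocks₂₂ B 1).2 (by simpa using le_iff.1 hAB)
  exact le_iff.2 (by simpa using (hB.fromBlocks₁₁ 1 A⁻¹).1 h_block)

theorem det_add_mul_det_le (hA : A.PosDef) (hAB : A ≤ B) {P : Matrix n n 𝕜} (hP : P.PosSemidef) :
    (B + P).det * A.det ≤ (A + P).det * B.det := by
  have hB : B.PosDef := posDef_of_le hA hAB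
  obtain ⟨R, rfl⟩ := CStarAlgebra.nonneg_iff_eq_star_mul_self.1 hP.nonneg
  have h_conj : 1 + R * B⁻¹ * Rᴴ ≤ 1 + R * A⁻¹ * Rᴴ :=
    add_le_add_right (star_right_conjugate_le_conjugate (inv_le_inv_of_le hA hAB) R) 1
  have h_posDef : (1 + R * B⁻¹ * Rᴴ).PosDef :=
    PosDef.one.add_posSemidef (hB.inv.posSemidef.mul_mul_conjTranspose_same R)
  calc (B + Rᴴ * R).det * A.det = A.det * B.det * (1 + R * B⁻¹ * Rᴴ).det := by
        rw [det_add_mul _ _ hB.det_pos.ne'.isUnit]; ring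
    _ ≤ A.det * B.det * (1 + R * A⁻¹ * Rᴴ).det :=
        mul_le_mul_of_nonneg_left (det_le_det_of_le h_posDef h_conj)
          (mul_pos hA.det_pos hB.det_pos).le
    _ = (A + Rᴴ * R).det * B.det := by
        rw [det_add_mul _ _ hA.det_pos.ne'.isUnit]; ring

theorem re_det_pos (hA : A.PosDef) : 0 < RCLike.re A.det :=
  (RCLike.pos_iff.1 hA.det_pos).1

theorem re_det_mul_det (hA : A.PosDef) (B : Matrix n n 𝕜) :
    RCLike.re (B.det * A.det) = RCLike.re B.det * RCLike.re A.det := by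
  rw [RCLike.mul_re, (RCLike.pos_iff.1 hA.det_pos).2, mul_zero, sub_zero]

/-- The log-determinant of a positive definite matrix over `ℝ` or `ℂ`. Such a matrix has a positive
real determinant, so `re` only changes its type; on other matrices the value is meaningless. -/
noncomputable def logDet (A : Matrix n n 𝕜) : ℝ :=
  Real.log (RCLike.re A.det)

theorem logDet_le_logDet (hA : A.PosDef) (hAB : A ≤ B) : logDet A ≤ logDet B :=
  Real.log_le_log (re_det_pos hA) (RCLike.re_le_re (det_le_det_of_le hA hAB))

theorem logDet_add_sub_logDet_le (hA : A.PosDef) (hAB : A ≤ B) {P : Matrix n n 𝕜}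
    (hP : P.PosSemidef) :
    logDet (B + P) - logDet B ≤ logDet (A + P) - logDet A := by
  have hB : B.PosDef := posDef_of_le hA hAB
  have hA_pos := re_det_pos hA
  have hB_pos := re_det_pos hB
  have hAP_pos := re_det_pos (hA.add_posSemidef hP)
  have hBP_pos := re_det_pos (hB.add_posSemidef hP)
  have h_re : RCLike.re (B + P).det * RCLike.re A.det ≤
      RCLike.re (A + P).det * RCLike.re B.det := by
    simpa only [re_det_mul_det hA, re_det_mul_det hB] using
      RCLike.re_le_re (det_add_mul_det_le hA hAB hP)
  simp only [logDet]
  rw [← Real.log_div hBP_pos.ne' hB_pos.ne', ← Real.log_div hAP_pos.ne' hA_pos.ne']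
  exact Real.log_le_log (div_pos hBP_pos hB_pos) ((div_le_div_iff₀ hB_pos hA_pos).2 h_re)

theorem stmt6_general {ι : Type*} [DecidableEq ι] (hA : A.PosDef) {P : ι → Matrix n n 𝕜}
    (hP : ∀ i, (P i).PosSemidef) (f : Finset ι → ℝ)
    (hf : ∀ C : Finset ι, f C = logDet (A + ∑ i ∈ C, P i)) :
    ∀ C C' : Finset ι, C ⊆ C' → ∀ j ∉ C',
      f C ≤ f C' ∧ f (insert j C') - f C' ≤ f (insert j C) - f C := by
  intro C C' hCC' j hj
  have h_posDef : (A + ∑ i ∈ C, P i).PosDef := hA.add_posSemidef (posSemidef_sum C fun i _ ↦ hP i)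
  have h_le : A + ∑ i ∈ C, P i ≤ A + ∑ i ∈ C', P i :=
    add_le_add_right (Finset.sum_le_sum_of_subset_of_nonneg hCC' fun i _ _ ↦ (hP i).nonneg) A
  have h_insert (D : Finset ι) (hjD : j ∉ D) :
      f (insert j D) = logDet (A + ∑ i ∈ D, P i + P j) := by
    rw [hf, Finset.sum_insert hjD, add_comm (P j), add_assoc]
  rw [h_insert C' hj, h_insert C fun hjC ↦ hj (hCC' hjC), hf, hf]
  exact ⟨logDet_le_logDet h_posDef h_le, logDet_add_sub_logDet_le h_posDef h_le (hP j)⟩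

end LoewnerOrder

/-- Monotonicity and submodularity (diminishing returns) of the capacity objective
`f(C) = log det(I + Σ_{i∈C} w_i u_i u_iᵀ)` of Eq. (6): for finite sets `C ⊆ C'` and
`j ∉ C'`, `f(C) ≤ f(C')` and `f(C' ∪ {j}) − f(C') ≤ f(C ∪ {j}) − f(C)`. -/
theorem stmt6 {n : ℕ} {I : Type*} [Fintype I] [DecidableEq I]
    (u : I → Fin n → ℝ) (w : I → ℝ) (hw : ∀ i, 0 ≤ w i)
    (f : Finset I → ℝ)
    (hf : ∀ C : Finset I,
      f C = Real.log (1 + ∑ i ∈ C, w i • vecMulVec (u i) (u i)).det) :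
    ∀ C C' : Finset I, C ⊆ C' → ∀ j ∉ C',
      f C ≤ f C' ∧ f (insert j C') - f C' ≤ f (insert j C) - f C :=
  stmt6_general PosDef.one (fun i ↦ (posSemidef_vecMulVec_self_star (u i)).smul (hw i)) f hf
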